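/- Let u₀ : ℝ → ℝⁿ be Borel measurable and square-integrable on I, and let (u_k) be a sequence such that for each k ≥ 0, u_{k+1} is a minimizer of the Rudin–Osher–Fatemi energy E_{u_k} with datum u_k (these are the iterates of the resolvent used in the exponential formula for the total variation flow). Then for every open interval J ⊆ I and every k ≥ 0, eVariationOn u_k J ≤ eVariationOn u₀ J. -/

import Mathlib

open MeasureTheory Set Filter
open scoped ENNReal

noncomputable section

/-- Square-integrability of `w` on the set `S`. -/
def SqIntOn {n : ℕ} (w : ℝ → EuclideanSpace ℝ (Fin n)) (S : Set ℝ) : Prop :=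
  MeasureTheory.IntegrableOn (fun x => ‖w x‖ ^ 2) S

/-- The Rudin–Osher–Fatemi energy with fidelity weight `1/(2 lam)`, datum `f`,
on the interval `I = Ioo a b`. -/
def rofEnergy {n : ℕ} (lam a b : ℝ) (f w : ℝ → EuclideanSpace ℝ (Fin n)) : ℝ≥0∞ :=
  eVariationOn w (Set.Ioo a b) +
    ENNReal.ofReal ((1 / (2 * lam)) * ∫ x in Set.Ioo a b, ‖w x - f x‖ ^ 2)

/-- `u` is a minimizer of the ROF energy among Borel measurable functions
square-integrable on `Ioo a b`. -/
def IsMinimizer {n : ℕ} (lam a b : ℝ) (f u : ℝ → EuclideanSpace ℝ (Fin n)) : Prop :=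
  Measurable u ∧ SqIntOn u (Set.Ioo a b) ∧
    ∀ w : ℝ → EuclideanSpace ℝ (Fin n), Measurable w → SqIntOn w (Set.Ioo a b) →
      rofEnergy lam a b f u ≤ rofEnergy lam a b f w

/-!
Write `f = (u - g) / lam` for a minimizer `u` with datum `g`, and let `Z` be the primitive of `f`
vanishing at `a`. Testing minimality against translates of `u`, against `u` plus a jump and against
the function obtained from `u` by collapsing its variation on an interval shows that `‖Z‖ ≤ 1` and
that `u` moves only where `‖Z‖ = 1`, and then in the direction of `Z`: the variation of `u` is the
integral of `⟪Z, du⟫`, while that of `g` is at least the integral of `⟪Z, dg⟫`. Since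
`u = g + lam • Z'`, the variation of `u` exceeds that of `g` by at most `lam` times the integral of
`⟪Z, dZ'⟫`. Between the first and the last point where `‖Z‖ = 1` this integral is minus that of
`‖Z'‖²` plus boundary terms, which vanish because `‖Z‖` is maximal there. As `f` is only
integrable, the integration by parts is carried out for second differences of `Z` on a fine grid,
averaged over translations of the grid.
-/

theorem le_of_forall_le_add_mul {x y z : ℝ} (h : ∀ ε ∈ Ioo (0 : ℝ) 1, x ≤ y + ε * z) : x ≤ y := by
  have hlim : Tendsto (fun ε : ℝ => y + ε * z) (nhdsWithin 0 (Ioi 0)) (nhds (y + 0 * z)) :=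
    (Continuous.tendsto (by fun_prop) 0).mono_left nhdsWithin_le_nhds
  rw [zero_mul, add_zero] at hlim
  refine ge_of_tendsto hlim ?_
  filter_upwards [Ioo_mem_nhdsGT zero_lt_one] with ε hε using h ε hε

theorem exists_eq_nat_mul_of_nonneg {x η : ℝ} (hx : 0 ≤ x) (hη : 0 < η) :
    ∃ (m : ℕ) (h : ℝ), h ∈ Ioo 0 η ∧ x = m * h := by
  rcases hx.eq_or_lt with rfl | hx
  · exact ⟨0, η / 2, ⟨by linarith, by linarith⟩, by simp⟩
  · obtain ⟨m, hm⟩ := exists_nat_gt (x / η)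
    have hm0 : (0 : ℝ) < m := (div_pos hx hη).trans hm
    exact ⟨m, x / m, ⟨div_pos hx hm0, (div_lt_comm₀ hη hm0).1 hm⟩, by field_simp⟩

section Variation

variable {α E : Type*} [LinearOrder α] [NormedAddCommGroup E]

theorem eVariationOn_add_le (u w : α → E) (S : Set α) :
    eVariationOn (fun x => u x + w x) S ≤ eVariationOn u S + eVariationOn w S := by
  refine iSup_le fun p => ?_
  calc ∑ i ∈ Finset.range p.1, edist (u (p.2.1 (i + 1)) + w (p.2.1 (i + 1)))
          (u (p.2.1 i) + w (p.2.1 i))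
      ≤ ∑ i ∈ Finset.range p.1, (edist (u (p.2.1 (i + 1))) (u (p.2.1 i)) +
          edist (w (p.2.1 (i + 1))) (w (p.2.1 i))) :=
        Finset.sum_le_sum fun _ _ => edist_add_add_le _ _ _ _
    _ ≤ eVariationOn u S + eVariationOn w S := by
        rw [Finset.sum_add_distrib]
        gcongr <;> exact eVariationOn.sum_le p.2.2.1 p.2.2.2

theorem eVariationOn_add_const (u : α → E) (v : E) (S : Set α) :
    eVariationOn (fun x => u x + v) S = eVariationOn u S := by
  simp only [eVariationOn, edist_add_right]

theorem eVariationOn_const_smul_le [NormedSpace ℝ E] (c : ℝ) (u : α → E) (S : Set α) :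
    eVariationOn (fun x => c • u x) S ≤ ‖c‖ₑ * eVariationOn u S :=
  (lipschitzWith_smul c).lipschitzOnWith.comp_eVariationOn_le (mapsTo_univ u S)

theorem eVariationOn_indicator_Ioi_const_le (x : α) (v : E) (S : Set α) :
    eVariationOn ((Ioi x).indicator fun _ => v) S ≤ ‖v‖ₑ := by
  have hmono : Monotone fun y : α => decide (x < y) := fun y z hyz => by
    simpa only [Bool.le_iff_imp, decide_eq_true_eq] using fun hxy => hxy.trans_le hyz
  have hcomp : (Ioi x).indicator (fun _ => v) =
      (fun b : Bool => if b then v else 0) ∘ fun y => decide (x < y) := by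
    ext y
    simp [indicator_apply]
  calc eVariationOn ((Ioi x).indicator fun _ => v) S
      ≤ eVariationOn (fun b : Bool => if b then v else 0) {false, true} := by
        rw [hcomp]
        exact eVariationOn.comp_le_of_monotoneOn _ _ (hmono.monotoneOn S) fun y _ => by
          simpa using le_or_gt y x
    _ = ‖v‖ₑ := by simp [eVariationOn.pair, enorm_eq_nnnorm]

theorem eVariationOn_add_smul_sub_le [NormedSpace ℝ E] (u w : α → E) (S : Set α) {τ : ℝ}
    (h0 : 0 ≤ τ) (h1 : τ ≤ 1) :
    eVariationOn (fun x => u x + τ • (w x - u x)) S ≤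
      ENNReal.ofReal (1 - τ) * eVariationOn u S + ENNReal.ofReal τ * eVariationOn w S := by
  have hcomb : (fun x => u x + τ • (w x - u x)) = fun x => (1 - τ) • u x + τ • w x := by
    funext x
    module
  rw [hcomb, ← Real.enorm_of_nonneg h0, ← Real.enorm_of_nonneg (sub_nonneg.2 h1)]
  grw [eVariationOn_add_le, eVariationOn_const_smul_le, eVariationOn_const_smul_le]

theorem boundedVariationOn_add_smul_sub [NormedSpace ℝ E] {u w : α → E} {S : Set α}
    (hu : BoundedVariationOn u S) (hw : BoundedVariationOn w S) {τ : ℝ} (h0 : 0 ≤ τ)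
    (h1 : τ ≤ 1) : BoundedVariationOn (fun x => u x + τ • (w x - u x)) S :=
  ne_top_of_le_ne_top (ENNReal.add_ne_top.2 ⟨ENNReal.mul_ne_top ENNReal.ofReal_ne_top hu,
    ENNReal.mul_ne_top ENNReal.ofReal_ne_top hw⟩) (eVariationOn_add_smul_sub_le u w S h0 h1)

theorem toReal_eVariationOn_add_smul_sub_le [NormedSpace ℝ E] {u w : α → E} {S : Set α}
    (hu : BoundedVariationOn u S) (hw : BoundedVariationOn w S) {τ : ℝ} (h0 : 0 ≤ τ)
    (h1 : τ ≤ 1) :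
    (eVariationOn (fun x => u x + τ • (w x - u x)) S).toReal ≤
      (1 - τ) * (eVariationOn u S).toReal + τ * (eVariationOn w S).toReal := by
  have hu' := ENNReal.mul_ne_top (ENNReal.ofReal_ne_top (r := 1 - τ)) hu
  have hw' := ENNReal.mul_ne_top (ENNReal.ofReal_ne_top (r := τ)) hw
  refine (ENNReal.toReal_mono (ENNReal.add_ne_top.2 ⟨hu', hw'⟩)
    (eVariationOn_add_smul_sub_le u w S h0 h1)).trans_eq ?_
  rw [ENNReal.toReal_add hu' hw', ENNReal.toReal_mul, ENNReal.toReal_mul,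
    ENNReal.toReal_ofReal (sub_nonneg.2 h1), ENNReal.toReal_ofReal h0]

/-- The modification of `u` that is constant on `[s, t]` and has the increments of `u` elsewhere;
it is the competitor that detects the variation of a minimizer on `[s, t]`. -/
def collapse (u : α → E) (s t : α) (x : α) : E :=
  u (min x s) + (u (max x t) - u t)

theorem collapse_of_le {u : α → E} {s t x : α} (hst : s ≤ t) (hx : x ≤ s) :
    collapse u s t x = u x := by
  simp [collapse, hx, hx.trans hst]

theorem collapse_of_mem_Icc {u : α → E} {s t x : α} (hx : x ∈ Icc s t) :
    collapse u s t x = u s := by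
  simp [collapse, hx.1, hx.2]

theorem collapse_of_ge {u : α → E} {s t x : α} (hst : s ≤ t) (hx : t ≤ x) :
    collapse u s t x = u x + (u s - u t) := by
  rw [collapse, min_eq_right (hst.trans hx), max_eq_left hx]
  abel

theorem eVariationOn_collapse_add_le (u : α → E) {S : Set α} {s t : α} (hst : s ≤ t)
    (hs : s ∈ S) (ht : t ∈ S) :
    eVariationOn (collapse u s t) S + eVariationOn u (S ∩ Icc s t) ≤ eVariationOn u S := by
  have hleft : eVariationOn (fun x => u (min x s)) S ≤ eVariationOn u (S ∩ Iic s) :=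
    eVariationOn.comp_le_of_monotoneOn u _ (monotone_id.min monotone_const |>.monotoneOn S)
      fun x hx => ⟨by rcases min_choice x s with h | h <;> simp_all, min_le_right _ _⟩
  have hright : eVariationOn (fun x => u (max x t) - u t) S ≤ eVariationOn u (S ∩ Ici t) := by
    simp only [sub_eq_add_neg]
    rw [eVariationOn_add_const fun x => u (max x t)]
    exact eVariationOn.comp_le_of_monotoneOn u _ (monotone_id.max monotone_const |>.monotoneOn S)
      fun x hx => ⟨by rcases max_choice x t with h | h <;> simp_all, le_max_right _ _⟩
  calc eVariationOn (collapse u s t) S + eVariationOn u (S ∩ Icc s t)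
      ≤ eVariationOn u (S ∩ Iic s) + eVariationOn u (S ∩ Ici t) +
          eVariationOn u (S ∩ Icc s t) := by
        gcongr
        exact (eVariationOn_add_le _ _ S).trans (add_le_add hleft hright)
    _ = eVariationOn u (S ∩ Iic s) + eVariationOn u (S ∩ Icc s t) +
          eVariationOn u (S ∩ Ici t) := by ring
    _ ≤ eVariationOn u (S ∩ Iic s ∪ S ∩ Icc s t ∪ S ∩ Ici t) := by
        grw [eVariationOn.add_le_union u fun x hx y hy => hx.2.trans hy.2.1,
          eVariationOn.add_le_union u]
        rintro x (hx | hx) y hy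
        exacts [(hx.2.trans hst).trans hy.2, hx.2.2.trans hy.2]
    _ ≤ eVariationOn u S :=
        eVariationOn.mono u (union_subset (union_subset inter_subset_left inter_subset_left)
          inter_subset_left)

end Variation

section Discrete

variable {E : Type*} [NormedAddCommGroup E] [InnerProductSpace ℝ E]

theorem two_mul_inner_second_difference_le (x y z : E) :
    2 * inner ℝ y ((z - y) - (y - x)) ≤ (‖z‖ ^ 2 - ‖y‖ ^ 2) - (‖y‖ ^ 2 - ‖x‖ ^ 2) := by
  have hz := norm_sub_sq_real y z
  have hx := norm_sub_sq_real y x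
  have hsplit : inner ℝ y ((z - y) - (y - x)) = inner ℝ y z + inner ℝ y x - 2 * ‖y‖ ^ 2 := by
    rw [← real_inner_self_eq_norm_sq]
    simp only [inner_sub_right]
    ring
  linarith [sq_nonneg ‖y - z‖, sq_nonneg ‖y - x‖]

theorem sum_inner_second_difference_nonpos (z : ℕ → E) (m : ℕ) (hfirst : ‖z 0‖ ≤ ‖z 1‖)
    (hlast : ‖z (m + 2)‖ ≤ ‖z (m + 1)‖) :
    ∑ i ∈ Finset.range (m + 1),
      inner ℝ (z (i + 1)) ((z (i + 2) - z (i + 1)) - (z (i + 1) - z i)) ≤ 0 := by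
  have htelescope := Finset.sum_range_sub (fun i => ‖z (i + 1)‖ ^ 2 - ‖z i‖ ^ 2) (m + 1)
  have hle := Finset.sum_le_sum fun i (_ : i ∈ Finset.range (m + 1)) =>
    two_mul_inner_second_difference_le (z i) (z (i + 1)) (z (i + 2))
  have hfirst' := pow_le_pow_left₀ (norm_nonneg _) hfirst 2
  have hlast' := pow_le_pow_left₀ (norm_nonneg _) hlast 2
  rw [← Finset.mul_sum] at hle
  simp only [zero_add, add_assoc, Nat.reduceAdd] at htelescope hle
  linarith

end Discrete
theorem exists_pos_forall_integral_norm_lt {E : Type*} [NormedAddCommGroup E] {f : ℝ → E}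
    (hf : Integrable f) {η : ℝ} (hη : 0 < η) :
    ∃ δ > 0, ∀ s t, s ≤ t → t - s < δ → ∫ x in s..t, ‖f x‖ < η := by
  obtain ⟨δ, hδ, hsmall⟩ := exists_pos_setLIntegral_lt_of_measure_lt hf.2.ne
    (ENNReal.ofReal_pos.2 hη).ne'
  obtain ⟨r, -, hr, hrδ⟩ := ENNReal.lt_iff_exists_real_btwn.1 hδ
  refine ⟨r, ENNReal.ofReal_pos.1 hr, fun s t hst hts => ?_⟩
  have hvol : volume (Ioc s t) < δ := by
    rw [Real.volume_Ioc]
    exact (ENNReal.ofReal_le_ofReal hts.le).trans_lt hrδ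
  rw [intervalIntegral.integral_of_le hst, integral_norm_eq_lintegral_enorm hf.1.restrict]
  exact ENNReal.toReal_lt_of_lt_ofReal (hsmall _ hvol)

section InnerIntegral

variable {E : Type*} [NormedAddCommGroup E] [InnerProductSpace ℝ E]

theorem sum_inner_increments_le_variation {g : ℝ → E} {S : Set ℝ} (hg : BoundedVariationOn g S)
    {N : ℕ} {y : ℕ → ℝ} (hy : Monotone y) (hyS : ∀ i ≤ N, y i ∈ S) {ζ : ℕ → E}
    (hζ : ∀ i < N, ‖ζ i‖ ≤ 1) :
    ∑ i ∈ Finset.range N, inner ℝ (ζ i) (g (y (i + 1)) - g (y i)) ≤ (eVariationOn g S).toReal := by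
  calc ∑ i ∈ Finset.range N, inner ℝ (ζ i) (g (y (i + 1)) - g (y i))
      ≤ ∑ i ∈ Finset.range N, dist (g (y (i + 1))) (g (y i)) := by
        refine Finset.sum_le_sum fun i hi => (real_inner_le_norm _ _).trans ?_
        rw [dist_eq_norm]
        exact mul_le_of_le_one_left (norm_nonneg _) (hζ i (Finset.mem_range.1 hi))
    _ = (∑ i ∈ Finset.range N, edist (g (y (i + 1))) (g (y i))).toReal := by
        rw [ENNReal.toReal_sum fun _ _ => edist_ne_top _ _]
        simp only [dist_edist]
    _ ≤ (eVariationOn g S).toReal :=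
        ENNReal.toReal_mono hg (eVariationOn.sum_le_of_monotoneOn_Iic (hy.monotoneOn _) hyS)

variable [CompleteSpace E] {f Z : ℝ → E}

theorem intervalIntegral_inner_const (hf : Integrable f) (s t : ℝ) (v : E) :
    ∫ x in s..t, inner ℝ (f x) v = inner ℝ (∫ x in s..t, f x) v := by
  simp only [real_inner_comm v]
  exact (innerSL ℝ v).intervalIntegral_comp_comm hf.intervalIntegrable

theorem intervalIntegral_inner_of_eqOn (hf : Integrable f) {φ : ℝ → E} {a b s t : ℝ} {v : E}
    (has : a ≤ s) (htb : t ≤ b) (hfφ : Integrable fun x => (inner ℝ (f x) (φ x) : ℝ))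
    (hleft : ∀ x ∈ Ioc a s, φ x = 0) (hright : ∀ x ∈ Ioc t b, φ x = v) :
    ∫ x in a..b, inner ℝ (f x) (φ x) =
      (∫ x in s..t, inner ℝ (f x) (φ x)) + inner ℝ (∫ x in t..b, f x) v := by
  have hzero : ∫ x in a..s, inner ℝ (f x) (φ x) = 0 :=
    intervalIntegral.integral_zero_ae (Eventually.of_forall fun x hx => by
      rw [hleft x (uIoc_of_le has ▸ hx), inner_zero_right])
  have hconst : ∫ x in t..b, inner ℝ (f x) (φ x) = inner ℝ (∫ x in t..b, f x) v := by
    rw [← intervalIntegral_inner_const hf]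
    exact intervalIntegral.integral_congr_ae (Eventually.of_forall fun x hx => by
      rw [hright x (uIoc_of_le htb ▸ hx)])
  rw [← hconst, ← intervalIntegral.integral_add_adjacent_intervals (b := t)
    hfφ.intervalIntegrable hfφ.intervalIntegrable,
    ← intervalIntegral.integral_add_adjacent_intervals (b := s) (a := a)
    hfφ.intervalIntegrable hfφ.intervalIntegrable, hzero, zero_add]

theorem exists_shift_sum_inner_increments_nonpos (hf : Integrable f)
    (hZ : ∀ s t, Z t - Z s = ∫ x in s..t, f x) {x : ℕ → ℝ} {h : ℝ} (hh : 0 < h)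
    (hx : ∀ i, x (i + 1) = x i + h) (m : ℕ) (hfirst : ‖Z (x 0)‖ ≤ ‖Z (x 1)‖)
    (hlast : ‖Z (x (m + 2))‖ ≤ ‖Z (x (m + 1))‖) :
    ∃ s ∈ Ioo 0 h, ∑ i ∈ Finset.range (m + 1),
      inner ℝ (Z (x (i + 1))) (f (x (i + 1) + s) - f (x i + s)) ≤ 0 := by
  set F : ℝ → ℝ := fun s => ∑ i ∈ Finset.range (m + 1),
    inner ℝ (Z (x (i + 1))) (f (x (i + 1) + s) - f (x i + s))
  have hshift : ∀ i, Integrable fun s => f (x i + s) := fun i => hf.comp_add_left (x i)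
  have hincr : ∀ i, Integrable fun s => f (x (i + 1) + s) - f (x i + s) :=
    fun i => (hshift _).sub (hshift _)
  have hterm : ∀ i, Integrable fun s =>
      (inner ℝ (Z (x (i + 1))) (f (x (i + 1) + s) - f (x i + s)) : ℝ) :=
    fun i => (hincr i).const_inner _
  have hcell : ∀ i, ∫ s in (0 : ℝ)..h, f (x i + s) = Z (x (i + 1)) - Z (x i) := fun i => by
    rw [intervalIntegral.integral_comp_add_left f, add_zero, ← hx, hZ]
  have hintegral : ∫ s in Ioo 0 h, F s ≤ 0 := by
    rw [← integral_Ioc_eq_integral_Ioo, ← intervalIntegral.integral_of_le hh.le,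
      intervalIntegral.integral_finsetSum fun i _ => (hterm i).intervalIntegrable]
    refine le_of_eq_of_le (Finset.sum_congr rfl fun i _ => ?_)
      (sum_inner_second_difference_nonpos (fun i => Z (x i)) m hfirst hlast)
    refine ((innerSL ℝ (Z (x (i + 1)))).intervalIntegral_comp_comm
      (hincr i).intervalIntegrable).trans ?_
    rw [intervalIntegral.integral_sub (hshift _).intervalIntegrable (hshift _).intervalIntegrable,
      hcell, hcell]
    rfl
  obtain ⟨s, hs, hsle⟩ := exists_le_setAverage (μ := volume) (s := Ioo 0 h) (f := F)
    (by simpa using hh) (by simp) (integrable_finsetSum _ fun i _ => hterm i).integrableOn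
  refine ⟨s, hs, hsle.trans ?_⟩
  rw [setAverage_eq]
  exact smul_nonpos_of_nonneg_of_nonpos (by positivity) hintegral

end InnerIntegral

/-- `Z`, a primitive of `f`, calibrates `u` on `Ioo c d`: the values of `Z` lie in the unit ball and
`u` moves in the direction of `Z`, so that on short intervals the increment of `u` along `Z` is
almost the whole variation of `u`. For smooth `u` this says `u' = ‖u'‖ • Z`; the last field is an
integrated form that makes sense across jumps of `u`. -/
structure IsCalibration {E : Type*} [NormedAddCommGroup E] [InnerProductSpace ℝ E]
    (u f Z : ℝ → E) (c d : ℝ) : Prop where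
  boundedVariationOn : BoundedVariationOn u (Ioo c d)
  integrable : Integrable f
  sub_eq_integral : ∀ s t, Z t - Z s = ∫ x in s..t, f x
  norm_le_one : ∀ x ∈ Ioo c d, ‖Z x‖ ≤ 1
  variation_mul_le : ∀ s ∈ Ioo c d, ∀ t ∈ Ioo c d, ∀ ξ ∈ Icc s t,
    (eVariationOn u (Icc s t)).toReal * (1 - 2 * ∫ x in s..t, ‖f x‖) ≤ inner ℝ (Z ξ) (u t - u s)

namespace IsCalibration

variable {E : Type*} [NormedAddCommGroup E] [InnerProductSpace ℝ E] {u g f Z : ℝ → E}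
  {lam c d : ℝ}

theorem mono (hcal : IsCalibration u f Z c d) {c' d' : ℝ} (hsub : Ioo c' d' ⊆ Ioo c d) :
    IsCalibration u f Z c' d' where
  boundedVariationOn := hcal.boundedVariationOn.mono hsub
  integrable := hcal.integrable
  sub_eq_integral := hcal.sub_eq_integral
  norm_le_one x hx := hcal.norm_le_one x (hsub hx)
  variation_mul_le s hs t ht := hcal.variation_mul_le s (hsub hs) t (hsub ht)

theorem continuous (hcal : IsCalibration u f Z c d) : Continuous Z := by
  have hprim : Z = fun x => Z 0 + ∫ y in (0 : ℝ)..x, f y := by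
    funext x
    rw [← hcal.sub_eq_integral 0 x, add_sub_cancel]
  rw [hprim]
  exact continuous_const.add
    (intervalIntegral.continuous_primitive (fun _ _ => hcal.integrable.intervalIntegrable) 0)

theorem eq_of_norm_add_lt (hcal : IsCalibration u f Z c d) {s t ξ : ℝ} (hs : s ∈ Ioo c d)
    (ht : t ∈ Ioo c d) (hξ : ξ ∈ Icc s t) (hlt : ‖Z ξ‖ + 2 * ∫ x in s..t, ‖f x‖ < 1) :
    u s = u t := by
  have hst := hξ.1.trans hξ.2
  have hbv := hcal.boundedVariationOn.mono (ordConnected_Ioo.out hs ht)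
  have hdist : ‖u t - u s‖ ≤ (eVariationOn u (Icc s t)).toReal := by
    rw [← dist_eq_norm]
    exact hbv.dist_le (right_mem_Icc.2 hst) (left_mem_Icc.2 hst)
  have hinner := (hcal.variation_mul_le s hs t ht ξ hξ).trans (real_inner_le_norm _ _)
  have hmul := mul_le_mul_of_nonneg_left hdist (norm_nonneg (Z ξ))
  have hzero : (eVariationOn u (Icc s t)).toReal ≤ 0 := by
    by_contra! hpos
    nlinarith
  exact (sub_eq_zero.1 (norm_le_zero_iff.1 (hdist.trans hzero))).symm

theorem eq_of_forall_norm_ne_one (hcal : IsCalibration u f Z c d) {s t : ℝ} (hs : s ∈ Ioo c d)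
    (ht : t ∈ Ioo c d) (hst : s ≤ t) (hZ : ∀ x ∈ Icc s t, ‖Z x‖ ≠ 1) : u s = u t := by
  have hsub : Icc s t ⊆ Ioo c d := ordConnected_Ioo.out hs ht
  refine isPreconnected_Icc.induction₂ (fun x y => u x = u y) (fun x hx => ?_)
    (fun _ _ _ _ _ _ => Eq.trans) (fun _ _ _ _ => Eq.symm)
    (left_mem_Icc.2 hst) (right_mem_Icc.2 hst)
  have hx1 : ‖Z x‖ < 1 := (hcal.norm_le_one x (hsub hx)).lt_of_ne (hZ x hx)
  obtain ⟨δ, hδ, hsmall⟩ := exists_pos_forall_integral_norm_lt hcal.integrable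
    (half_pos (sub_pos.2 hx1))
  filter_upwards [self_mem_nhdsWithin, nhdsWithin_le_nhds (Metric.ball_mem_nhds x hδ)] with y hy hyx
  rw [Metric.mem_ball, Real.dist_eq, abs_lt] at hyx
  rcases le_total x y with hxy | hxy
  · exact hcal.eq_of_norm_add_lt (hsub hx) (hsub hy) (left_mem_Icc.2 hxy)
      (by linarith [hsmall x y hxy (by linarith)])
  · exact (hcal.eq_of_norm_add_lt (hsub hy) (hsub hx) (right_mem_Icc.2 hxy)
      (by linarith [hsmall y x hxy (by linarith)])).symm

theorem eVariationOn_Icc_eq_zero_of_norm_ne_one (hcal : IsCalibration u f Z c d) {x y : ℝ}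
    (hx : x ∈ Ioo c d) (hy : y ∈ Ioo c d) (hZ : ∀ z ∈ Icc x y, ‖Z z‖ ≠ 1) :
    eVariationOn u (Icc x y) = 0 := by
  have hconst : ∀ z ∈ Icc x y, u x = u z := fun z hz =>
    hcal.eq_of_forall_norm_ne_one hx (ordConnected_Ioo.out hx hy hz) hz.1 fun w hw =>
      hZ w ⟨hw.1, hw.2.trans hz.2⟩
  refine eVariationOn.constant_on ?_
  rintro _ ⟨z, hz, rfl⟩ _ ⟨w, hw, rfl⟩
  rw [← hconst z hz, ← hconst w hw]

theorem eVariationOn_Icc_le_of_norm_ne_one (hcal : IsCalibration u f Z c d) {x y x' y' : ℝ}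
    (hx : x ∈ Ioo c d) (hy : y ∈ Ioo c d) (hx' : x' ∈ Ioo c d) (hy' : y' ∈ Ioo c d)
    (hxy' : x' ≤ y') (hleft : ∀ z ∈ Icc x x', ‖Z z‖ ≠ 1)
    (hright : ∀ z ∈ Icc y' y, ‖Z z‖ ≠ 1) :
    eVariationOn u (Icc x y) ≤ eVariationOn u (Icc x' y') := by
  have hclamp : EqOn u (u ∘ fun z => max x' (min z y')) (Icc x y) := by
    intro z hz
    have hzJ : z ∈ Ioo c d := ordConnected_Ioo.out hx hy hz
    rcases le_total z x' with hzx | hzx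
    · simp only [Function.comp, min_eq_left (hzx.trans hxy'), max_eq_left hzx]
      exact hcal.eq_of_forall_norm_ne_one hzJ hx' hzx fun w hw => hleft w ⟨hz.1.trans hw.1, hw.2⟩
    rcases le_total z y' with hzy | hzy
    · simp only [Function.comp, min_eq_left hzy, max_eq_right hzx]
    · simp only [Function.comp, min_eq_right hzy, max_eq_right hxy']
      exact (hcal.eq_of_forall_norm_ne_one hy' hzJ hzy fun w hw =>
        hright w ⟨hw.1, hw.2.trans hz.2⟩).symm
  rw [eVariationOn.congr hclamp]
  exact eVariationOn.comp_le_of_monotoneOn u _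
    ((monotone_const.max (monotone_id.min monotone_const)).monotoneOn _)
    fun z _ => ⟨le_max_left _ _, max_le hxy' (min_le_right _ _)⟩

theorem one_sub_mul_variation_le_sum (hcal : IsCalibration u f Z c d) {N : ℕ} {y ξ : ℕ → ℝ}
    (hy : Monotone y) (hyJ : ∀ i ≤ N, y i ∈ Ioo c d) (hξ : ∀ i < N, ξ i ∈ Icc (y i) (y (i + 1)))
    {ε : ℝ} (hε : ∀ i < N, 2 * ∫ x in y i..y (i + 1), ‖f x‖ ≤ ε) :
    (1 - ε) * (eVariationOn u (Icc (y 0) (y N))).toReal ≤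
      ∑ i ∈ Finset.range N, inner ℝ (Z (ξ i)) (u (y (i + 1)) - u (y i)) := by
  have hbv : ∀ i ∈ Finset.range N, eVariationOn u (Icc (y i) (y (i + 1))) ≠ ⊤ := fun i hi =>
    hcal.boundedVariationOn.mono
      (ordConnected_Ioo.out (hyJ i (Finset.mem_range.1 hi).le) (hyJ _ (Finset.mem_range.1 hi)))
  rw [← eVariationOn.sum' u hy, ENNReal.toReal_sum hbv, Finset.mul_sum]
  refine Finset.sum_le_sum fun i hi => ?_
  have hiN := Finset.mem_range.1 hi
  refine le_trans ?_ (hcal.variation_mul_le _ (hyJ i hiN.le) _ (hyJ _ hiN) _ (hξ i hiN))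
  rw [mul_comm]
  exact mul_le_mul_of_nonneg_left (by linarith [hε i hiN]) ENNReal.toReal_nonneg

variable [CompleteSpace E]

theorem exists_shift_one_sub_mul_variation_le (hcal : IsCalibration u f Z c d) (hlam : 0 ≤ lam)
    (hg : ∀ x ∈ Ioo c d, u x - g x = lam • f x) (hgbv : BoundedVariationOn g (Ioo c d))
    {x : ℕ → ℝ} {h : ℝ} (hh : 0 < h) (hx : ∀ i, x (i + 1) = x i + h) {m : ℕ}
    (hc : c < x 0) (hd : x (m + 2) < d) (hfirst : ‖Z (x 1)‖ = 1) (hlast : ‖Z (x (m + 1))‖ = 1)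
    {ε : ℝ} (hε : ∀ s t, s ≤ t → t - s ≤ h → 2 * ∫ x in s..t, ‖f x‖ ≤ ε) :
    ∃ s ∈ Ioo 0 h, (1 - ε) * (eVariationOn u (Icc (x 0 + s) (x (m + 1) + s))).toReal ≤
      (eVariationOn g (Ioo c d)).toReal := by
  have hmono : Monotone x := monotone_nat_of_le_succ fun i => by linarith [hx i]
  have hxJ : ∀ i ≤ m + 2, x i ∈ Ioo c d := fun i hi =>
    ⟨hc.trans_le (hmono i.zero_le), (hmono hi).trans_lt hd⟩
  obtain ⟨s, hs, hsum⟩ := exists_shift_sum_inner_increments_nonpos hcal.integrable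
    hcal.sub_eq_integral hh hx m (hfirst ▸ hcal.norm_le_one _ (hxJ 0 (by lia)))
    (hlast ▸ hcal.norm_le_one _ (hxJ _ le_rfl))
  have hyJ : ∀ i ≤ m + 1, x i + s ∈ Ioo c d := fun i hi =>
    ⟨by linarith [(hxJ i (by lia)).1, hs.1],
      by linarith [(hxJ (i + 1) (by lia)).2, hx i, hs.2]⟩
  refine ⟨s, hs, ?_⟩
  calc (1 - ε) * (eVariationOn u (Icc (x 0 + s) (x (m + 1) + s))).toReal
      ≤ ∑ i ∈ Finset.range (m + 1),
          inner ℝ (Z (x (i + 1))) (u (x (i + 1) + s) - u (x i + s)) :=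
        hcal.one_sub_mul_variation_le_sum (hmono.add_const s) hyJ
          (fun i _ => ⟨by linarith [hx i, hs.2], by linarith [hs.1]⟩)
          (fun i _ => hε _ _ (by linarith [hx i]) (by linarith [hx i]))
    _ = ∑ i ∈ Finset.range (m + 1),
          inner ℝ (Z (x (i + 1))) (g (x (i + 1) + s) - g (x i + s)) +
        lam * ∑ i ∈ Finset.range (m + 1),
          inner ℝ (Z (x (i + 1))) (f (x (i + 1) + s) - f (x i + s)) := by
        rw [Finset.mul_sum, ← Finset.sum_add_distrib]
        refine Finset.sum_congr rfl fun i hi => ?_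
        have hi := Finset.mem_range.1 hi
        rw [← real_inner_smul_right, ← inner_add_right, smul_sub, ← hg _ (hyJ i hi.le),
          ← hg _ (hyJ _ hi)]
        congr 1
        abel
    _ ≤ ∑ i ∈ Finset.range (m + 1),
          inner ℝ (Z (x (i + 1))) (g (x (i + 1) + s) - g (x i + s)) :=
        add_le_of_nonpos_right (mul_nonpos_of_nonneg_of_nonpos hlam hsum)
    _ ≤ (eVariationOn g (Ioo c d)).toReal :=
        sum_inner_increments_le_variation hgbv (hmono.add_const s) hyJ
          fun i hi => hcal.norm_le_one _ (hxJ _ (by lia))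

theorem one_sub_mul_variation_Icc_le (hcal : IsCalibration u f Z c d) (hlam : 0 ≤ lam)
    (hg : ∀ x ∈ Ioo c d, u x - g x = lam • f x) (hgbv : BoundedVariationOn g (Ioo c d))
    {x y : ℝ} (hx : x ∈ Ioo c d) (hy : y ∈ Ioo c d) {ε : ℝ} (hε : ε ∈ Ioo (0 : ℝ) 1) :
    (1 - ε) * (eVariationOn u (Icc x y)).toReal ≤ (eVariationOn g (Ioo c d)).toReal := by
  have hcompact : IsCompact (Icc x y ∩ {z | ‖Z z‖ = 1}) :=
    isCompact_Icc.inter_right (isClosed_eq hcal.continuous.norm continuous_const)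
  rcases (Icc x y ∩ {z | ‖Z z‖ = 1}).eq_empty_or_nonempty with hempty | hne
  · simp [hcal.eVariationOn_Icc_eq_zero_of_norm_ne_one hx hy fun _ hz hz1 =>
      hempty.subset ⟨hz, hz1⟩]
  · obtain ⟨p, ⟨hpxy, hp⟩, hpmin⟩ := hcompact.exists_isLeast hne
    obtain ⟨q, ⟨hqxy, hq⟩, hqmax⟩ := hcompact.exists_isGreatest hne
    have hpq : p ≤ q := hpmin ⟨hqxy, hq⟩
    obtain ⟨δ, hδ, hsmall⟩ := exists_pos_forall_integral_norm_lt hcal.integrable (half_pos hε.1)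
    obtain ⟨m, h, ⟨hh, hlt⟩, hqp⟩ := exists_eq_nat_mul_of_nonneg (sub_nonneg.2 hpq)
      (lt_min hδ (lt_min (sub_pos.2 (hx.1.trans_le hpxy.1)) (sub_pos.2 (hqxy.2.trans_lt hy.2))))
    rw [lt_min_iff, lt_min_iff] at hlt
    obtain ⟨hhδ, hhp, hhq⟩ := hlt
    have hlast : p - h + (m + 1 : ℕ) * h = q := by push_cast; linarith
    obtain ⟨s, hs, hle⟩ := hcal.exists_shift_one_sub_mul_variation_le hlam hg hgbv
      (x := fun i => p - h + i * h) hh (fun i => by push_cast; ring) (m := m)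
      (by simpa using by linarith) (by push_cast; linarith) (by simpa using hp)
      (by rw [hlast]; exact hq)
      (fun s t hst hts => (by linarith [hsmall s t hst (hts.trans_lt hhδ)] :
        2 * ∫ x in s..t, ‖f x‖ ≤ ε))
    rw [hlast, Nat.cast_zero, zero_mul, add_zero] at hle
    have hp'J : p - h + s ∈ Ioo c d := ⟨by linarith [hs.1], by linarith [hs.2, hpxy.2, hy.2]⟩
    have hq'J : q + s ∈ Ioo c d := ⟨by linarith [hs.1, hqxy.1, hx.1], by linarith [hs.2]⟩
    -- On `Icc x y`, `u` is constant before `p` and after `q`: shifting the grid loses no variation.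
    refine le_trans (mul_le_mul_of_nonneg_left (ENNReal.toReal_mono
      (hcal.boundedVariationOn.mono (ordConnected_Ioo.out hp'J hq'J)) ?_)
      (sub_nonneg.2 hε.2.le)) hle
    refine hcal.eVariationOn_Icc_le_of_norm_ne_one hx hy hp'J hq'J (by linarith)
      (fun z hz hz1 => ?_) (fun z hz hz1 => ?_)
    · linarith [hpmin ⟨⟨hz.1, by linarith [hz.2, hs.2, hpxy.2]⟩, hz1⟩, hz.2, hs.2]
    · linarith [hqmax ⟨⟨by linarith [hz.1, hs.1, hqxy.1], hz.2⟩, hz1⟩, hz.1, hs.1]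

theorem eVariationOn_le (hcal : IsCalibration u f Z c d) (hlam : 0 ≤ lam)
    (hg : ∀ x ∈ Ioo c d, u x - g x = lam • f x) :
    eVariationOn u (Ioo c d) ≤ eVariationOn g (Ioo c d) := by
  by_cases hgbv : eVariationOn g (Ioo c d) = ⊤
  · simp [hgbv]
  rw [eVariationOn.eq_biSup_inter_Icc]
  refine iSup₂_le fun ⟨x, y⟩ ⟨hx, hy, _⟩ => ?_
  rw [inter_eq_self_of_subset_right (ordConnected_Ioo.out hx hy)]
  refine (ENNReal.toReal_le_toReal
    (hcal.boundedVariationOn.mono (ordConnected_Ioo.out hx hy)) hgbv).1 ?_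
  refine le_of_forall_le_add_mul (z := (eVariationOn u (Icc x y)).toReal) fun ε hε => ?_
  linarith [hcal.one_sub_mul_variation_Icc_le hlam hg hgbv hx hy hε]

end IsCalibration

section SquareIntegrable

theorem memLp_restrict_of_boundedVariationOn {α E : Type*} [LinearOrder α] [MeasurableSpace α]
    [NormedAddCommGroup E] {μ : Measure α} {S : Set α} [IsFiniteMeasure (μ.restrict S)]
    (hS : MeasurableSet S) {w : α → E} (hm : AEStronglyMeasurable w (μ.restrict S))
    (hw : BoundedVariationOn w S) (p : ℝ≥0∞) : MemLp w p (μ.restrict S) := by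
  rcases S.eq_empty_or_nonempty with rfl | ⟨z, hz⟩
  · simp
  refine MemLp.of_bound hm (‖w z‖ + (eVariationOn w S).toReal) ?_
  filter_upwards [ae_restrict_mem hS] with x hx
  have hdist := hw.dist_le hx hz
  rw [dist_eq_norm] at hdist
  linarith [norm_sub_norm_le (w x) (w z)]

variable {α E : Type*} [MeasurableSpace α] [NormedAddCommGroup E] [InnerProductSpace ℝ E]
  {μ : Measure α} {f φ : α → E}

theorem integrable_inner_of_memLp_two (hf : MemLp f 2 μ) (hφ : MemLp φ 2 μ) :
    Integrable (fun x => (inner ℝ (f x) (φ x) : ℝ)) μ :=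
  (hf.norm.integrable_mul hφ.norm).mono' (hf.1.inner hφ.1)
    (Eventually.of_forall fun _ => norm_inner_le_norm _ _)

theorem integral_norm_add_smul_sq (hf : MemLp f 2 μ) (hφ : MemLp φ 2 μ) (τ : ℝ) :
    ∫ x, ‖f x + τ • φ x‖ ^ 2 ∂μ =
      ∫ x, ‖f x‖ ^ 2 ∂μ + 2 * τ * ∫ x, inner ℝ (f x) (φ x) ∂μ + τ ^ 2 * ∫ x, ‖φ x‖ ^ 2 ∂μ := by
  have hff := (memLp_two_iff_integrable_sq_norm hf.1).1 hf
  have hφφ := (memLp_two_iff_integrable_sq_norm hφ.1).1 hφ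
  have hfφ := integrable_inner_of_memLp_two hf hφ
  rw [← integral_const_mul, ← integral_const_mul, ← integral_add hff (hfφ.const_mul _),
    ← integral_add (f := fun x => ‖f x‖ ^ 2 + 2 * τ * inner ℝ (f x) (φ x))
      (hff.add (hfφ.const_mul _)) (hφφ.const_mul _)]
  refine integral_congr_ae (Eventually.of_forall fun x => ?_)
  simp only [norm_add_sq_real, inner_smul_right, norm_smul, mul_pow, Real.norm_eq_abs, sq_abs]
  ring

end SquareIntegrable

section Energy

variable {n : ℕ} {lam a b : ℝ} {g w : ℝ → EuclideanSpace ℝ (Fin n)}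

theorem SqIntOn.memLp {S : Set ℝ} (hw : SqIntOn w S) (hm : Measurable w) :
    MemLp w 2 (volume.restrict S) :=
  (memLp_two_iff_integrable_sq_norm hm.aestronglyMeasurable).2 hw

theorem rofEnergy_ne_top (hw : BoundedVariationOn w (Ioo a b)) : rofEnergy lam a b g w ≠ ⊤ :=
  ENNReal.add_ne_top.2 ⟨hw, ENNReal.ofReal_ne_top⟩

theorem toReal_rofEnergy (hlam : 0 ≤ lam) (hw : BoundedVariationOn w (Ioo a b)) :
    (rofEnergy lam a b g w).toReal =
      (eVariationOn w (Ioo a b)).toReal +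
        1 / (2 * lam) * ∫ x in Ioo a b, ‖w x - g x‖ ^ 2 := by
  rw [rofEnergy, ENNReal.toReal_add hw ENNReal.ofReal_ne_top, ENNReal.toReal_ofReal]
  exact mul_nonneg (by positivity) (integral_nonneg fun _ => by positivity)

end Energy

/-- The normalized residual `(u - g) / lam` on `Ioo a b`, extended by zero. It is the derivative of
`rofDualField`. -/
def rofResidual {n : ℕ} (lam a b : ℝ) (g u : ℝ → EuclideanSpace ℝ (Fin n)) :
    ℝ → EuclideanSpace ℝ (Fin n) :=
  (Ioo a b).indicator fun x => lam⁻¹ • (u x - g x)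

/-- The dual variable of the ROF problem: the primitive of the normalized residual that vanishes at
the left endpoint. When `u` is a minimizer it calibrates `u`. -/
def rofDualField {n : ℕ} (lam a b : ℝ) (g u : ℝ → EuclideanSpace ℝ (Fin n)) (x : ℝ) :
    EuclideanSpace ℝ (Fin n) :=
  ∫ y in a..x, rofResidual lam a b g u y

namespace IsMinimizer

variable {n : ℕ} {lam a b : ℝ} {g u w : ℝ → EuclideanSpace ℝ (Fin n)}

theorem boundedVariationOn (hu : IsMinimizer lam a b g u) : BoundedVariationOn u (Ioo a b) := by
  have hconst : eVariationOn (fun _ => (0 : EuclideanSpace ℝ (Fin n))) (Ioo a b) = 0 :=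
    eVariationOn.constant_on (subsingleton_singleton.anti (image_subset_iff.2 fun _ _ => rfl))
  have hle := hu.2.2 (fun _ => 0) measurable_const (by simp [SqIntOn])
  exact ne_top_of_le_ne_top (rofEnergy_ne_top (hconst.trans_ne ENNReal.zero_ne_top))
    (le_self_add.trans hle)

theorem memLp (hu : IsMinimizer lam a b g u) : MemLp u 2 (volume.restrict (Ioo a b)) :=
  hu.2.1.memLp hu.1

theorem memLp_rofResidual (hu : IsMinimizer lam a b g u)
    (hg : MemLp g 2 (volume.restrict (Ioo a b))) : MemLp (rofResidual lam a b g u) 2 :=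
  (memLp_indicator_iff_restrict measurableSet_Ioo).2 ((hu.memLp.sub hg).const_smul lam⁻¹)

theorem integrable_rofResidual (hu : IsMinimizer lam a b g u)
    (hg : MemLp g 2 (volume.restrict (Ioo a b))) : Integrable (rofResidual lam a b g u) :=
  (integrable_indicator_iff measurableSet_Ioo).2
    (((hu.memLp.sub hg).const_smul lam⁻¹).integrable one_le_two)

theorem integrable_inner_rofResidual (hu : IsMinimizer lam a b g u)
    (hg : MemLp g 2 (volume.restrict (Ioo a b))) (hwm : Measurable w)
    (hw : BoundedVariationOn w (Ioo a b)) :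
    Integrable fun x => (inner ℝ (rofResidual lam a b g u x) (w x - u x) : ℝ) := by
  have hφ := (memLp_restrict_of_boundedVariationOn measurableSet_Ioo
    hwm.aestronglyMeasurable hw 2).sub hu.memLp
  refine IntegrableOn.integrable_of_forall_notMem_eq_zero (s := Ioo a b)
    (integrable_inner_of_memLp_two ((hu.memLp_rofResidual hg).restrict _) hφ) fun x hx => ?_
  rw [rofResidual, indicator_of_notMem hx, inner_zero_left]

-- Compare with `u + τ • (w - u)` and let `τ → 0`: the variation is convex and the fidelity term
-- contributes its derivative.
theorem variation_le_add_integral_inner (hu : IsMinimizer lam a b g u) (hlam : 0 < lam)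
    (hg : MemLp g 2 (volume.restrict (Ioo a b))) (hab : a ≤ b) (hwm : Measurable w)
    (hw : BoundedVariationOn w (Ioo a b)) :
    (eVariationOn u (Ioo a b)).toReal ≤ (eVariationOn w (Ioo a b)).toReal +
      ∫ x in a..b, inner ℝ (rofResidual lam a b g u x) (w x - u x) := by
  have hd : MemLp (fun x => u x - g x) 2 (volume.restrict (Ioo a b)) := hu.memLp.sub hg
  have hφ : MemLp (fun x => w x - u x) 2 (volume.restrict (Ioo a b)) :=
    (memLp_restrict_of_boundedVariationOn measurableSet_Ioo hwm.aestronglyMeasurable hw 2).sub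
      hu.memLp
  have hinner : ∫ x in a..b, inner ℝ (rofResidual lam a b g u x) (w x - u x) =
      lam⁻¹ * ∫ x in Ioo a b, inner ℝ (u x - g x) (w x - u x) := by
    rw [intervalIntegral.integral_of_le hab, integral_Ioc_eq_integral_Ioo, ← integral_const_mul]
    refine setIntegral_congr_fun measurableSet_Ioo fun x hx => ?_
    simp only [rofResidual, indicator_of_mem hx, real_inner_smul_left]
  rw [hinner]
  refine le_of_forall_le_add_mul (z := lam⁻¹ / 2 * ∫ x in Ioo a b, ‖w x - u x‖ ^ 2)
    fun τ hτ => le_of_mul_le_mul_left ?_ hτ.1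
  set wτ := fun x => u x + τ • (w x - u x)
  have hconvex := toReal_eVariationOn_add_smul_sub_le hu.boundedVariationOn hw hτ.1.le hτ.2.le
  have hwτm : Measurable wτ := hu.1.add ((hwm.sub hu.1).const_smul τ)
  have hwτ : BoundedVariationOn wτ (Ioo a b) := 
    boundedVariationOn_add_smul_sub hu.boundedVariationOn hw hτ.1.le hτ.2.le
  have hmin := ENNReal.toReal_mono (rofEnergy_ne_top hwτ) (hu.2.2 wτ hwτm
    ((memLp_two_iff_integrable_sq_norm hwτm.aestronglyMeasurable).1
      (hu.memLp.add (hφ.const_smul τ))))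
  have hexpand := integral_norm_add_smul_sq hd hφ τ
  simp only [sub_add_eq_add_sub] at hexpand
  rw [toReal_rofEnergy hlam.le hu.boundedVariationOn, toReal_rofEnergy hlam.le hwτ, hexpand,
    one_div, mul_inv] at hmin
  linarith

theorem rofDualField_sub (hu : IsMinimizer lam a b g u)
    (hg : MemLp g 2 (volume.restrict (Ioo a b))) (s t : ℝ) :
    rofDualField lam a b g u t - rofDualField lam a b g u s =
      ∫ x in s..t, rofResidual lam a b g u x :=
  intervalIntegral.integral_interval_sub_left (hu.integrable_rofResidual hg).intervalIntegrable
    (hu.integrable_rofResidual hg).intervalIntegrable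

-- Translating a minimizer does not change its variation, so the residual has mean zero.
theorem rofDualField_right (hu : IsMinimizer lam a b g u) (hlam : 0 < lam)
    (hg : MemLp g 2 (volume.restrict (Ioo a b))) (hab : a ≤ b) :
    rofDualField lam a b g u b = 0 := by
  have hvar := eVariationOn_add_const u (-rofDualField lam a b g u b) (Ioo a b)
  have hle := hu.variation_le_add_integral_inner hlam hg hab (hu.1.add_const _)
    (hvar.trans_ne hu.boundedVariationOn)
  simp only [add_sub_cancel_left] at hle
  rw [hvar, intervalIntegral_inner_const (hu.integrable_rofResidual hg), ← rofDualField,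
    inner_neg_right, real_inner_self_eq_norm_sq] at hle
  exact norm_eq_zero.1 ((sq_nonpos_iff _).1 (by linarith))

theorem variation_le_add_inner_of_eqOn (hu : IsMinimizer lam a b g u) (hlam : 0 < lam)
    (hg : MemLp g 2 (volume.restrict (Ioo a b))) (hwm : Measurable w)
    (hw : BoundedVariationOn w (Ioo a b)) {s t : ℝ} {v : EuclideanSpace ℝ (Fin n)}
    (has : a ≤ s) (hst : s ≤ t) (htb : t ≤ b) (hleft : ∀ x ∈ Ioc a s, w x = u x)
    (hright : ∀ x ∈ Ioc t b, w x = u x + v) :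
    (eVariationOn u (Ioo a b)).toReal + inner ℝ (rofDualField lam a b g u t) v ≤
      (eVariationOn w (Ioo a b)).toReal +
        ∫ x in s..t, inner ℝ (rofResidual lam a b g u x) (w x - u x) := by
  have hab := has.trans (hst.trans htb)
  have hle := hu.variation_le_add_integral_inner hlam hg hab hwm hw
  rw [intervalIntegral_inner_of_eqOn (hu.integrable_rofResidual hg) has htb
    (hu.integrable_inner_rofResidual hg hwm hw) (fun x hx => sub_eq_zero.2 (hleft x hx))
    (fun x hx => sub_eq_iff_eq_add'.2 (hright x hx)), ← hu.rofDualField_sub hg t b,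
    hu.rofDualField_right hlam hg hab, zero_sub, inner_neg_left] at hle
  linarith

theorem norm_rofDualField_le_one (hu : IsMinimizer lam a b g u) (hlam : 0 < lam)
    (hg : MemLp g 2 (volume.restrict (Ioo a b))) {x : ℝ} (hx : x ∈ Ioo a b) :
    ‖rofDualField lam a b g u x‖ ≤ 1 := by
  set v := rofDualField lam a b g u x with hv
  set w := fun y => u y + (Ioi x).indicator (fun _ => v) y
  have hjump : eVariationOn w (Ioo a b) ≤ eVariationOn u (Ioo a b) + ‖v‖ₑ :=
    (eVariationOn_add_le _ _ _).trans (by grw [eVariationOn_indicator_Ioi_const_le])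
  have htop := ENNReal.add_ne_top.2 ⟨hu.boundedVariationOn, enorm_ne_top (x := v)⟩
  have hle := hu.variation_le_add_inner_of_eqOn hlam hg (w := w) (v := v)
    (hu.1.add (measurable_const.indicator measurableSet_Ioi)) (ne_top_of_le_ne_top htop hjump)
    hx.1.le le_rfl hx.2.le (fun y hy => by simp [w, hy.2])
    (fun y hy => by simp [w, hy.1])
  have hjump' := ENNReal.toReal_mono htop hjump
  rw [ENNReal.toReal_add hu.boundedVariationOn enorm_ne_top, toReal_enorm] at hjump'
  rw [intervalIntegral.integral_same, ← hv, real_inner_self_eq_norm_sq] at hle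
  by_contra! hgt
  nlinarith

theorem variation_mul_le_inner_right (hu : IsMinimizer lam a b g u) (hlam : 0 < lam)
    (hg : MemLp g 2 (volume.restrict (Ioo a b))) {s t : ℝ} (hs : s ∈ Ioo a b) (ht : t ∈ Ioo a b)
    (hst : s ≤ t) :
    (eVariationOn u (Icc s t)).toReal * (1 - ∫ x in s..t, ‖rofResidual lam a b g u x‖) ≤
      inner ℝ (rofDualField lam a b g u t) (u t - u s) := by
  have hf := hu.integrable_rofResidual hg
  have hsub : Icc s t ⊆ Ioo a b := ordConnected_Ioo.out hs ht
  have hbv := hu.boundedVariationOn.mono hsub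
  have hcollapse := eVariationOn_collapse_add_le u hst hs ht
  rw [inter_eq_self_of_subset_right hsub] at hcollapse
  have hw := ne_top_of_le_ne_top hu.boundedVariationOn (le_self_add.trans hcollapse)
  have hwm : Measurable (collapse u s t) :=
    (hu.1.comp (measurable_id.min measurable_const)).add
      ((hu.1.comp (measurable_id.max measurable_const)).sub_const _)
  have hle := hu.variation_le_add_inner_of_eqOn hlam hg hwm hw hs.1.le hst ht.2.le
    (fun x hx => collapse_of_le hst hx.2) (fun x hx => collapse_of_ge hst hx.1.le)
  have hmiddle : ∫ x in s..t, inner ℝ (rofResidual lam a b g u x) (collapse u s t x - u x) ≤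
      (∫ x in s..t, ‖rofResidual lam a b g u x‖) * (eVariationOn u (Icc s t)).toReal := by
    rw [← intervalIntegral.integral_mul_const]
    refine intervalIntegral.integral_mono_on hst
      (hu.integrable_inner_rofResidual hg hwm hw).intervalIntegrable
      (hf.norm.mul_const _).intervalIntegrable fun x hx => (real_inner_le_norm _ _).trans ?_
    rw [collapse_of_mem_Icc hx, ← dist_eq_norm]
    exact mul_le_mul_of_nonneg_left (hbv.dist_le (left_mem_Icc.2 hst) hx) (norm_nonneg _)
  have hcollapse' := ENNReal.toReal_mono hu.boundedVariationOn hcollapse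
  rw [ENNReal.toReal_add hw hbv] at hcollapse'
  rw [← neg_sub (u t), inner_neg_right] at hle
  linarith

theorem isCalibration (hu : IsMinimizer lam a b g u) (hlam : 0 < lam)
    (hg : MemLp g 2 (volume.restrict (Ioo a b))) :
    IsCalibration u (rofResidual lam a b g u) (rofDualField lam a b g u) a b where
  boundedVariationOn := hu.boundedVariationOn
  integrable := hu.integrable_rofResidual hg
  sub_eq_integral := hu.rofDualField_sub hg
  norm_le_one _ := hu.norm_rofDualField_le_one hlam hg
  variation_mul_le s hs t ht ξ hξ := by
    have hf := hu.integrable_rofResidual hg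
    have hst := hξ.1.trans hξ.2
    have hright := hu.variation_mul_le_inner_right hlam hg hs ht hst
    have hZ : ‖rofDualField lam a b g u t - rofDualField lam a b g u ξ‖ ≤
        ∫ x in s..t, ‖rofResidual lam a b g u x‖ := by
      rw [hu.rofDualField_sub hg]
      exact (intervalIntegral.norm_integral_le_integral_norm hξ.2).trans
        (intervalIntegral.integral_mono_interval hξ.1 hξ.2 le_rfl
          (Eventually.of_forall fun _ => norm_nonneg _) hf.norm.intervalIntegrable)
    have hdist : ‖u t - u s‖ ≤ (eVariationOn u (Icc s t)).toReal := by
      rw [← dist_eq_norm]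
      exact (hu.boundedVariationOn.mono (ordConnected_Ioo.out hs ht)).dist_le
        (right_mem_Icc.2 hst) (left_mem_Icc.2 hst)
    have hinner := (real_inner_le_norm _ _).trans
      (mul_le_mul hZ hdist (norm_nonneg _) ((norm_nonneg _).trans hZ))
    rw [inner_sub_left] at hinner
    linarith

theorem eVariationOn_Ioo_le (hu : IsMinimizer lam a b g u) (hlam : 0 < lam)
    (hg : MemLp g 2 (volume.restrict (Ioo a b))) {c d : ℝ} (hJ : Ioo c d ⊆ Ioo a b) :
    eVariationOn u (Ioo c d) ≤ eVariationOn g (Ioo c d) :=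
  ((hu.isCalibration hlam hg).mono hJ).eVariationOn_le hlam.le fun x hx => by
    rw [rofResidual, indicator_of_mem (hJ hx), smul_inv_smul₀ hlam.ne']

end IsMinimizer

/-- along the resolvent iterates of the total variation flow
(`u_{k+1}` minimizes the ROF energy with datum `u_k`), the total variation over any open
subinterval `J = Ioo c d ⊆ I` does not increase: `eVariationOn u_k J ≤ eVariationOn u₀ J`. -/
theorem tv_nonincreasing_along_resolvent_iterates
    {n : ℕ} (hn : 1 ≤ n) (a b : ℝ) (hab : a < b) (lam : ℝ) (hlam : 0 < lam)
    (useq : ℕ → ℝ → EuclideanSpace ℝ (Fin n))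
    (h0_meas : Measurable (useq 0)) (h0_sq : SqIntOn (useq 0) (Set.Ioo a b))
    (hiter : ∀ k : ℕ, IsMinimizer lam a b (useq k) (useq (k + 1)))
    (c d : ℝ) (hJ : Set.Ioo c d ⊆ Set.Ioo a b) (k : ℕ) :
    eVariationOn (useq k) (Set.Ioo c d) ≤ eVariationOn (useq 0) (Set.Ioo c d) := by
  have hdatum : ∀ j, MemLp (useq j) 2 (volume.restrict (Ioo a b)) := fun j => by
    cases j with
    | zero => exact h0_sq.memLp h0_meas
    | succ j => exact (hiter j).memLp
  induction k with
  | zero => exact le_rfl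
  | succ k ih => exact ((hiter k).eVariationOn_Ioo_le hlam (hdatum k) hJ).trans ih
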